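/- Let u_0 be a vertex of an isoradial graph with mesh δ and suppose the free Green's function satisfies |G_Γ(u; u_0) − (2π)^{-1} log|u − u_0|| ≤ Cδ²/|u − u_0|² for u ≠ u_0. Then for the discretized disc B^δ_Γ(u_0, R) with R/δ sufficiently large, the Green's function G_{B^δ_Γ(u_0,R)}(u; u_0) = G_Γ(u; u_0) − ∑_{a ∈ ∂} ω^δ(u; {a}) G_Γ(a; u_0) satisfies |G_{B^δ_Γ(u_0,R)}(u; u_0)| ≍ δ/R for all vertices u with R − 5δ ≤ |u − u_0| ≤ R − 3δ; consequently, by the identity ω^δ(u_0; {a}; B^δ_Γ(u_0,R)) = −tan θ_{a a_int}·G_{B^δ_Γ(u_0,R)}(a_int; u_0), the exit probability at each boundary vertex satisfies ω^δ(u_0; {a}; B^δ_Γ(u_0, R)) ≍ δ/R. -/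

import Mathlib

/-- An abstract isoradial graph `Γ` of mesh `δ` with rhombi half-angles uniformly in
`[η, π/2 − η]` (condition (♠)). The fields record: the vertex set, the (finite)
neighborhoods, the half-angle of each edge's rhombus, the edge length
`|v − u| = 2δ cos θ`, the discrete harmonicity of linear and quadratic functions
(the defining algebraic identities of isoradiality), and the comparability of the
combinatorial and Euclidean distances inside balls. -/
structure IsoradialGraph (δ η : ℝ) where
  verts : Set ℂ
  nbrs : ℂ → Finset ℂ
  nbrs_symm : ∀ u v, v ∈ nbrs u ↔ u ∈ nbrs v
  nbrs_sub : ∀ u, u ∈ verts → ∀ v ∈ nbrs u, v ∈ verts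
  nbrs_ne : ∀ u, u ∈ verts → ∀ v ∈ nbrs u, v ≠ u
  nbrs_nonempty : ∀ u, u ∈ verts → (nbrs u).Nonempty
  halfAngle : ℂ → ℂ → ℝ
  halfAngle_symm : ∀ u v, halfAngle u v = halfAngle v u
  halfAngle_mem : ∀ u, u ∈ verts → ∀ v ∈ nbrs u,
    halfAngle u v ∈ Set.Icc η (Real.pi / 2 - η)
  edge_len : ∀ u, u ∈ verts → ∀ v ∈ nbrs u,
    dist v u = 2 * δ * Real.cos (halfAngle u v)
  lin_harm : ∀ u, u ∈ verts →
    ∑ v ∈ nbrs u, (Real.tan (halfAngle u v) : ℂ) * (v - u) = 0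
  quad_harm : ∀ u, u ∈ verts →
    ∑ v ∈ nbrs u, (Real.tan (halfAngle u v) : ℂ) * (v ^ 2 - u ^ 2) = 0
  path_in_ball : ∀ (z : ℂ) (ρ : ℝ) (u v : ℂ),
    u ∈ verts ∩ Metric.ball z ρ → v ∈ verts ∩ Metric.ball z ρ →
    ∃ (m : ℕ) (p : ℕ → ℂ), p 0 = u ∧ p m = v ∧
      (∀ i ≤ m, p i ∈ verts ∩ Metric.ball z ρ) ∧
      (∀ i < m, p (i + 1) ∈ nbrs (p i)) ∧
      (m : ℝ) * δ ≤ (dist u v + δ) * (8 / η)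

/-- `H` is discrete harmonic at the vertex `u` of the isoradial graph `G`. -/
def IsoradialGraph.HarmAt {δ η : ℝ} (G : IsoradialGraph δ η) (H : ℂ → ℝ) (u : ℂ) : Prop :=
  ∑ v ∈ G.nbrs u, Real.tan (G.halfAngle u v) * (H v - H u) = 0

open Metric Finset


/-!
Compare the free Green's function with `log` on the boundary: by the minimum principle, the
harmonic extension of its boundary values is `(2π)⁻¹ log R + O(δ/R)` on the whole disc, and the
lower bound carries no term of order `δ/R` since boundary vertices lie outside the disc. Hence minus
the Green's function of the disc is of order `δ/R` at distance between `3δ` and `5δ` from the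
circle. Green's identity expresses the exit probability at `a` through the values of this function
at the interior neighbours of `a`. These may lie closer to the circle than `3δ`; the half-plane
property of isoradial graphs (a consequence of the harmonicity of `z` and `z²`) connects them to the
good annulus by boundedly many inward edges, along which Harnack's inequality is applied.
-/

section WeightedSums

variable {ι : Type*} {s : Finset ι} {c x : ι → ℝ}

/-- A form of the Bhatia–Davis inequality. -/
theorem exists_le_of_sum_mul_eq_zero_of_le_sum_mul_sq {a b : ℝ} (hs : s.Nonempty) (ha : 0 < a)
    (hc : ∀ i ∈ s, 0 < c i) (hmean : ∑ i ∈ s, c i * x i = 0) (hlow : ∀ i ∈ s, -a ≤ x i)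
    (hvar : a * b * ∑ i ∈ s, c i ≤ ∑ i ∈ s, c i * x i ^ 2) : ∃ i ∈ s, b ≤ x i := by
  obtain ⟨k, hk, hmax⟩ := s.exists_max_image x hs
  refine ⟨k, hk, ?_⟩
  have hprod : 0 ≤ ∑ i ∈ s, c i * ((x i + a) * (x k - x i)) :=
    sum_nonneg fun i hi => mul_nonneg (hc i hi).le
      (mul_nonneg (by linarith [hlow i hi]) (sub_nonneg.2 (hmax i hi)))
  have hexpand : ∑ i ∈ s, c i * ((x i + a) * (x k - x i)) =
      (x k - a) * ∑ i ∈ s, c i * x i + a * x k * ∑ i ∈ s, c i - ∑ i ∈ s, c i * x i ^ 2 := by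
    simp only [mul_sum, ← sum_add_distrib, ← sum_sub_distrib]
    exact sum_congr rfl fun i _ => by ring
  rw [hexpand, hmean, mul_zero, zero_add] at hprod
  have hpos : 0 < a * ∑ i ∈ s, c i := mul_pos ha (sum_pos hc hs)
  refine le_of_mul_le_mul_left ?_ hpos
  linarith

end WeightedSums

theorem log_le_log_add_sub_div {x y : ℝ} (hx : 0 < x) (hy : 0 < y) :
    Real.log y ≤ Real.log x + (y - x) / x := by
  have h := Real.log_le_sub_one_of_pos (div_pos hy hx)
  rw [Real.log_div hy.ne' hx.ne'] at h
  rw [sub_div, div_self hx.ne']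
  linarith

theorem inv_two_pi_mem_Icc : (2 * Real.pi)⁻¹ ∈ Set.Icc (1 / 7 : ℝ) (1 / 6) := by
  rw [one_div, one_div]
  exact ⟨inv_anti₀ (by positivity) (by linarith [Real.pi_lt_d2]),
    inv_anti₀ (by norm_num) (by linarith [Real.pi_gt_three])⟩

theorem exists_card_le_of_pairwise_lt_dist {X : Type*} [PseudoMetricSpace X] {A : Set X}
    (hA : TotallyBounded A) {ε : ℝ} (hε : 0 < ε) :
    ∃ d : ℕ, ∀ s : Finset X, ↑s ⊆ A → (s : Set X).Pairwise (ε < dist · ·) → #s ≤ d := by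
  obtain ⟨t, ht, hcover⟩ := totallyBounded_iff.1 hA (ε / 2) (half_pos hε)
  choose! p hp using fun x (hx : x ∈ A) => Set.mem_iUnion₂.1 (hcover hx)
  refine ⟨#ht.toFinset, fun s hsA hs => card_le_card_of_injOn p
    (fun x hx => ht.mem_toFinset.2 (hp x (hsA hx)).1) fun x hx y hy hxy => ?_⟩
  by_contra hne
  have hx' := mem_ball.1 (hp x (hsA hx)).2
  have hy' := mem_ball.1 (hp y (hsA hy)).2
  rw [← hxy] at hy'
  linarith [hs hx hy hne, dist_triangle_right x y (p x)]

/-- A locally finite graph whose edges carry symmetric conductances. The value of `cond` off the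
edges is irrelevant, and positivity of the conductances is assumed only where it matters. -/
structure Network (V : Type*) where
  nbrs : V → Finset V
  cond : V → V → ℝ
  mem_nbrs_comm : ∀ x y, y ∈ nbrs x ↔ x ∈ nbrs y
  cond_comm : ∀ x y, cond x y = cond y x

namespace Network

variable {V : Type*} (N : Network V)

/-- The unnormalized network Laplacian, positive at strict local minima. -/
def laplacian : (V → ℝ) →ₗ[ℝ] V → ℝ where
  toFun f x := ∑ y ∈ N.nbrs x, N.cond x y * (f y - f x)
  map_add' f g := by
    ext x
    simp only [Pi.add_apply, ← sum_add_distrib]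
    exact sum_congr rfl fun y _ => by ring
  map_smul' r f := by
    ext x
    simp only [Pi.smul_apply, RingHom.id_apply, smul_eq_mul, mul_sum]
    exact sum_congr rfl fun y _ => by ring

theorem laplacian_apply (f : V → ℝ) (x : V) :
    N.laplacian f x = ∑ y ∈ N.nbrs x, N.cond x y * (f y - f x) :=
  rfl

theorem cond_mul_le_of_superharmonic {h : V → ℝ} {x y : V}
    (hc : ∀ z ∈ N.nbrs x, 0 ≤ N.cond x z) (hh : ∀ z ∈ N.nbrs x, 0 ≤ h z)
    (hΔ : N.laplacian h x ≤ 0) (hy : y ∈ N.nbrs x) :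
    N.cond x y * h y ≤ (∑ z ∈ N.nbrs x, N.cond x z) * h x :=
  calc N.cond x y * h y ≤ ∑ z ∈ N.nbrs x, N.cond x z * h z :=
        single_le_sum (f := fun z => N.cond x z * h z)
          (fun z hz => mul_nonneg (hc z hz) (hh z hz)) hy
    _ = N.laplacian h x + (∑ z ∈ N.nbrs x, N.cond x z) * h x := by
        simp only [laplacian_apply, mul_sub, sum_sub_distrib, sum_mul, sub_add_cancel]
    _ ≤ (∑ z ∈ N.nbrs x, N.cond x z) * h x := by linarith

variable [DecidableEq V] {D : Finset V}

/-- The vertices outside `D` that have a neighbour in `D`. -/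
def outerBoundary (D : Finset V) : Finset V :=
  D.biUnion N.nbrs \ D

variable {N}

theorem mem_outerBoundary {a : V} : a ∈ N.outerBoundary D ↔ a ∉ D ∧ ∃ x ∈ D, a ∈ N.nbrs x := by
  rw [outerBoundary, mem_sdiff, mem_biUnion, and_comm]

theorem mem_union_outerBoundary {x y : V} (hx : x ∈ D) (hy : y ∈ N.nbrs x) :
    y ∈ D ∪ N.outerBoundary D :=
  mem_union.2 <| or_iff_not_imp_left.2 fun hyD => mem_outerBoundary.2 ⟨hyD, x, hx, hy⟩

/-- The function `φ`, strictly increasing along some edge at every vertex of `D`, replaces the usual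
assumption that every vertex of `D` is connected to the boundary. -/
theorem le_of_superharmonic {α : Type*} [LinearOrder α] {φ : V → α}
    (hc : ∀ x ∈ D, ∀ y ∈ N.nbrs x, 0 < N.cond x y) (hφ : ∀ x ∈ D, ∃ y ∈ N.nbrs x, φ x < φ y)
    {f : V → ℝ} (hf : ∀ x ∈ D, N.laplacian f x ≤ 0) {m : ℝ}
    (hm : ∀ b ∈ N.outerBoundary D, m ≤ f b) : ∀ x ∈ D, m ≤ f x := by
  by_contra! ⟨x, hx, hxm⟩
  obtain ⟨y, hy, hmin⟩ := (D ∪ N.outerBoundary D).exists_min_image f ⟨x, mem_union_left _ hx⟩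
  have hym : f y < m := (hmin x (mem_union_left _ hx)).trans_lt hxm
  have mem_of_eq : ∀ z ∈ D ∪ N.outerBoundary D, f z = f y → z ∈ D.filter (f · = f y) :=
    fun z hz hzy => mem_filter.2
      ⟨(mem_union.1 hz).resolve_right fun hzB => (hzy.trans_lt hym).not_ge (hm z hzB), hzy⟩
  -- Among the minimizers, take one at which `φ` is maximal: its neighbours are minimizers as well.
  obtain ⟨z, hz, hmax⟩ := (D.filter (f · = f y)).exists_max_image φ ⟨y, mem_of_eq y hy rfl⟩
  obtain ⟨hzD, hzy⟩ := mem_filter.1 hz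
  have hterm : ∀ w ∈ N.nbrs z, 0 ≤ N.cond z w * (f w - f z) := fun w hw =>
    mul_nonneg (hc z hzD w hw).le
      (sub_nonneg.2 (hzy.trans_le (hmin w (mem_union_outerBoundary hzD hw))))
  have hzero := (sum_eq_zero_iff_of_nonneg hterm).1 (le_antisymm (hf z hzD) (sum_nonneg hterm))
  obtain ⟨w, hw, hφw⟩ := hφ z hzD
  have hwz : f w = f z :=
    sub_eq_zero.1 ((mul_eq_zero.1 (hzero w hw)).resolve_left (hc z hzD w hw).ne')
  exact (hmax w (mem_of_eq w (mem_union_outerBoundary hzD hw) (hwz.trans hzy))).not_gt hφw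

theorem sum_mul_laplacian_sub_mul_laplacian (f g : V → ℝ) :
    ∑ x ∈ D, (f x * N.laplacian g x - g x * N.laplacian f x) =
      ∑ x ∈ D, ∑ y ∈ N.nbrs x \ D, N.cond x y * (f x * g y - g x * f y) := by
  have hpoint : ∀ x, f x * N.laplacian g x - g x * N.laplacian f x =
      ∑ y ∈ N.nbrs x, N.cond x y * (f x * g y - g x * f y) := fun x => by
    rw [laplacian_apply, laplacian_apply, mul_sum, mul_sum, ← sum_sub_distrib]
    exact sum_congr rfl fun y _ => by ring
  have hantisymm : ∑ x ∈ D, ∑ y ∈ N.nbrs x ∩ D, N.cond x y * (f x * g y - g x * f y) =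
      -∑ x ∈ D, ∑ y ∈ N.nbrs x ∩ D, N.cond x y * (f x * g y - g x * f y) := by
    conv_lhs => rw [sum_comm' (t' := D) (s' := fun y => N.nbrs y ∩ D) fun x y => by
      simp only [mem_inter, N.mem_nbrs_comm x y]; tauto]
    simp only [← sum_neg_distrib]
    exact sum_congr rfl fun x _ => sum_congr rfl fun y _ => by rw [N.cond_comm y x]; ring
  simp only [hpoint, ← sum_inter_add_sum_sdiff (N.nbrs _) D, sum_add_distrib]
  linarith

variable (N) in
/-- `ω x a` is the harmonic measure of the boundary vertex `a` seen from `x`, that is, the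
probability that the walk on the network started at `x` leaves `D` at `a`. -/
structure IsHarmonicMeasure (D : Finset V) (ω : V → V → ℝ) : Prop where
  harmonic : ∀ a ∈ N.outerBoundary D, ∀ x ∈ D, N.laplacian (ω · a) x = 0
  self : ∀ a ∈ N.outerBoundary D, ω a a = 1
  of_ne : ∀ a ∈ N.outerBoundary D, ∀ b ∈ N.outerBoundary D, b ≠ a → ω b a = 0

variable (N) in
/-- `g` is the Green's function of `D` with pole `x₀` and zero boundary values, with the sign
convention that makes it nonpositive. -/
structure IsGreen (D : Finset V) (x₀ : V) (g : V → ℝ) : Prop where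
  laplacian_pole : N.laplacian g x₀ = 1
  laplacian_of_ne : ∀ x ∈ D, x ≠ x₀ → N.laplacian g x = 0
  eq_zero : ∀ b ∈ N.outerBoundary D, g b = 0

variable (N) in
/-- The solution of the Dirichlet problem in `D` with boundary values `f`, if `ω` is the harmonic
measure. -/
def harmonicExtension (D : Finset V) (ω : V → V → ℝ) (f : V → ℝ) (x : V) : ℝ :=
  ∑ a ∈ N.outerBoundary D, ω x a * f a

variable {ω : V → V → ℝ} {f g : V → ℝ} {x₀ : V}

theorem IsHarmonicMeasure.laplacian_harmonicExtension (hω : N.IsHarmonicMeasure D ω) {x : V}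
    (hx : x ∈ D) : N.laplacian (N.harmonicExtension D ω f) x = 0 := by
  have hcomb : N.harmonicExtension D ω f = ∑ a ∈ N.outerBoundary D, f a • (ω · a) := by
    ext y
    simp only [harmonicExtension, Finset.sum_apply, Pi.smul_apply, smul_eq_mul, mul_comm]
  rw [hcomb, map_sum, Finset.sum_apply]
  refine sum_eq_zero fun a ha => ?_
  rw [map_smul, Pi.smul_apply, hω.harmonic a ha x hx, smul_zero]

theorem IsHarmonicMeasure.harmonicExtension_eq (hω : N.IsHarmonicMeasure D ω) {b : V}
    (hb : b ∈ N.outerBoundary D) : N.harmonicExtension D ω f b = f b := by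
  rw [harmonicExtension, sum_eq_single_of_mem b hb, hω.self b hb, one_mul]
  intro a ha hab
  rw [hω.of_ne a ha b hb hab.symm, zero_mul]

theorem IsHarmonicMeasure.isGreen_sub (hω : N.IsHarmonicMeasure D ω) (hx₀ : x₀ ∈ D)
    (hpole : N.laplacian f x₀ = 1) (hf : ∀ x ∈ D, x ≠ x₀ → N.laplacian f x = 0) :
    N.IsGreen D x₀ (f - N.harmonicExtension D ω f) where
  laplacian_pole := by
    rw [map_sub, Pi.sub_apply, hpole, hω.laplacian_harmonicExtension hx₀, sub_zero]
  laplacian_of_ne x hx hne := by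
    rw [map_sub, Pi.sub_apply, hf x hx hne, hω.laplacian_harmonicExtension hx, sub_zero]
  eq_zero b hb := by rw [Pi.sub_apply, hω.harmonicExtension_eq hb, sub_self]

theorem IsGreen.laplacian_neg_nonpos (hg : N.IsGreen D x₀ g) {x : V} (hx : x ∈ D) :
    N.laplacian (-g) x ≤ 0 := by
  rw [map_neg, Pi.neg_apply, neg_nonpos]
  rcases eq_or_ne x x₀ with rfl | hne
  · exact hg.laplacian_pole.symm ▸ zero_le_one
  · exact (hg.laplacian_of_ne x hx hne).ge

theorem IsHarmonicMeasure.eq_sum_cond_mul_neg_green (hω : N.IsHarmonicMeasure D ω)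
    (hg : N.IsGreen D x₀ g) (hx₀ : x₀ ∈ D) {a : V} (ha : a ∈ N.outerBoundary D) :
    ω x₀ a = ∑ x ∈ D with a ∈ N.nbrs x, N.cond x a * -g x := by
  have hinterior : ∑ x ∈ D, (ω x a * N.laplacian g x - g x * N.laplacian (ω · a) x) = ω x₀ a := by
    rw [sum_eq_single_of_mem x₀ hx₀, hg.laplacian_pole, hω.harmonic a ha x₀ hx₀, mul_one, mul_zero,
      sub_zero]
    intro x hx hne
    rw [hg.laplacian_of_ne x hx hne, hω.harmonic a ha x hx, mul_zero, mul_zero, sub_zero]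
  have hboundary : ∀ x ∈ D, ∑ y ∈ N.nbrs x \ D, N.cond x y * (ω x a * g y - g x * ω y a) =
      if a ∈ N.nbrs x then N.cond x a * -g x else 0 := fun x hx => by
    have hterm : ∀ y ∈ N.nbrs x \ D, N.cond x y * (ω x a * g y - g x * ω y a) =
        if a = y then N.cond x y * -g x else 0 := fun y hy => by
      obtain ⟨hyN, hyD⟩ := mem_sdiff.1 hy
      have hyB : y ∈ N.outerBoundary D := mem_outerBoundary.2 ⟨hyD, x, hx, hyN⟩
      rw [hg.eq_zero y hyB]
      split_ifs with hay
      · subst hay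
        rw [hω.self a ha]; ring
      · rw [hω.of_ne a ha y hyB (Ne.symm hay)]; ring
    rw [sum_congr rfl hterm, sum_ite_eq]
    simp only [mem_sdiff, (mem_outerBoundary.1 ha).1, not_false_eq_true, and_true]
  rw [← hinterior, sum_mul_laplacian_sub_mul_laplacian, sum_congr rfl hboundary, sum_filter]

end Network

namespace IsoradialGraph

variable {δ η : ℝ} (G : IsoradialGraph δ η)

/-- The network carried by an isoradial graph: the edges have conductance `tan θ`, so that
`G.HarmAt H u` is by definition `G.network.laplacian H u = 0`. -/
noncomputable def network : Network ℂ where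
  nbrs := G.nbrs
  cond u v := Real.tan (G.halfAngle u v)
  mem_nbrs_comm := G.nbrs_symm
  cond_comm u v := congrArg Real.tan (G.halfAngle_symm u v)

variable {G} {u v : ℂ}

section Edges

theorem le_pi_div_four (hu : u ∈ G.verts) : η ≤ Real.pi / 4 := by
  obtain ⟨v, hv⟩ := G.nbrs_nonempty u hu
  obtain ⟨hlow, hupp⟩ := G.halfAngle_mem u hu v hv
  linarith

theorem dist_le_of_mem_nbrs (hδ : 0 ≤ δ) (hu : u ∈ G.verts) (hv : v ∈ G.nbrs u) :
    dist v u ≤ 2 * δ := by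
  rw [G.edge_len u hu v hv]
  exact mul_le_of_le_one_right (by positivity) (Real.cos_le_one _)

theorem sum_tan_mul_sub_sq (hu : u ∈ G.verts) :
    ∑ v ∈ G.nbrs u, (Real.tan (G.halfAngle u v) : ℂ) * (v - u) ^ 2 = 0 :=
  calc ∑ v ∈ G.nbrs u, (Real.tan (G.halfAngle u v) : ℂ) * (v - u) ^ 2
      = ∑ v ∈ G.nbrs u, (Real.tan (G.halfAngle u v) : ℂ) * (v ^ 2 - u ^ 2) -
          2 * u * ∑ v ∈ G.nbrs u, (Real.tan (G.halfAngle u v) : ℂ) * (v - u) := by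
        rw [mul_sum, ← sum_sub_distrib]
        exact sum_congr rfl fun v _ => by ring
    _ = 0 := by rw [G.quad_harm u hu, G.lin_harm u hu, mul_zero, sub_zero]

theorem sum_tan_mul_inner (hu : u ∈ G.verts) (e : ℂ) :
    ∑ v ∈ G.nbrs u, Real.tan (G.halfAngle u v) * inner ℝ e (v - u) = 0 := by
  have hre := congrArg (fun z => inner ℝ e z) (G.lin_harm u hu)
  simpa only [← Complex.real_smul, inner_sum, real_inner_smul_right, inner_zero_right] using hre

/-- The anisotropic part of the covariance vanishes because `z²` is harmonic. -/
theorem sum_tan_mul_inner_sq (hu : u ∈ G.verts) (e : ℂ) :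
    ∑ v ∈ G.nbrs u, Real.tan (G.halfAngle u v) * inner ℝ e (v - u) ^ 2 =
      ‖e‖ ^ 2 / 2 * ∑ v ∈ G.nbrs u, Real.tan (G.halfAngle u v) * dist v u ^ 2 := by
  have hinner_sq : ∀ w : ℂ, inner ℝ e w ^ 2 = ‖e‖ ^ 2 / 2 * ‖w‖ ^ 2 +
      inner ℝ (e ^ 2) (w ^ 2) / 2 := fun w => by
    rw [Complex.sq_norm, Complex.sq_norm]
    simp only [Complex.normSq_apply, Complex.inner, pow_two, Complex.mul_re, Complex.mul_im,
      Complex.conj_re, Complex.conj_im]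
    ring
  have hre := congrArg (fun z => inner ℝ (e ^ 2) z) (sum_tan_mul_sub_sq hu)
  simp only [← Complex.real_smul, inner_sum, real_inner_smul_right, inner_zero_right] at hre
  simp only [hinner_sq, mul_add, sum_add_distrib, mul_sum, ← mul_div_assoc, ← sum_div, hre,
    zero_div, add_zero, dist_eq_norm]
  exact sum_congr rfl fun v _ => by ring

variable (hη : 0 < η)
include hη

theorem sin_pos (hu : u ∈ G.verts) : 0 < Real.sin η :=
  Real.sin_pos_of_pos_of_lt_pi hη (by linarith [le_pi_div_four hu, Real.pi_pos])

theorem tan_pos (hu : u ∈ G.verts) : 0 < Real.tan η :=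
  Real.tan_pos_of_pos_of_lt_pi_div_two hη (by linarith [le_pi_div_four hu, Real.pi_pos])

theorem tan_le_tan_halfAngle (hu : u ∈ G.verts) (hv : v ∈ G.nbrs u) :
    Real.tan η ≤ Real.tan (G.halfAngle u v) := by
  obtain ⟨hlow, hupp⟩ := G.halfAngle_mem u hu v hv
  exact Real.strictMonoOn_tan.monotoneOn ⟨by linarith, by linarith⟩ ⟨by linarith, by linarith⟩ hlow

theorem tan_halfAngle_le_inv_tan (hu : u ∈ G.verts) (hv : v ∈ G.nbrs u) :
    Real.tan (G.halfAngle u v) ≤ (Real.tan η)⁻¹ := by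
  obtain ⟨hlow, hupp⟩ := G.halfAngle_mem u hu v hv
  rw [← Real.tan_pi_div_two_sub]
  exact Real.strictMonoOn_tan.monotoneOn ⟨by linarith, by linarith⟩ ⟨by linarith, by linarith⟩ hupp

theorem tan_halfAngle_pos (hu : u ∈ G.verts) (hv : v ∈ G.nbrs u) :
    0 < Real.tan (G.halfAngle u v) :=
  (tan_pos hη hu).trans_le (tan_le_tan_halfAngle hη hu hv)

theorem le_dist_of_mem_nbrs (hδ : 0 ≤ δ) (hu : u ∈ G.verts) (hv : v ∈ G.nbrs u) :
    2 * δ * Real.sin η ≤ dist v u := by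
  obtain ⟨hlow, hupp⟩ := G.halfAngle_mem u hu v hv
  rw [G.edge_len u hu v hv, ← Real.cos_pi_div_two_sub]
  gcongr
  exact Real.cos_le_cos_of_nonneg_of_le_pi (by linarith) (by linarith [Real.pi_pos]) hupp

/-- Two vertices at smaller distance lie in a ball too small to contain an edge, so the path in this
ball joining them is trivial. -/
theorem eq_of_dist_lt (hδ : 0 ≤ δ) (hu : u ∈ G.verts) (hv : v ∈ G.verts)
    (huv : dist u v < 2 * δ * Real.sin η) : u = v := by
  have hball : ∀ w, dist w (midpoint ℝ u v) = dist u v / 2 →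
      w ∈ ball (midpoint ℝ u v) (δ * Real.sin η) := fun w hw => by rw [mem_ball, hw]; linarith
  obtain ⟨m, p, rfl, rfl, hp, hstep, -⟩ := G.path_in_ball (midpoint ℝ u v) (δ * Real.sin η) u v
    ⟨hu, hball u (by rw [dist_left_midpoint, Real.norm_ofNat]; ring)⟩
    ⟨hv, hball v (by rw [dist_right_midpoint, Real.norm_ofNat]; ring)⟩
  obtain rfl | hm := Nat.eq_zero_or_pos m
  · rfl
  · have hlen := le_dist_of_mem_nbrs hη hδ (hp 0 hm.le).1 (hstep 0 hm)
    have h0 := mem_ball.1 (hp 0 hm.le).2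
    have h1 := mem_ball.1 (hp (0 + 1) hm).2
    linarith [dist_triangle_right (p (0 + 1)) (p 0) (midpoint ℝ (p 0) (p m))]

theorem exists_card_nbrs_le (hη' : η < Real.pi) :
    ∃ d : ℕ, 0 < d ∧ ∀ {δ : ℝ}, 0 < δ → ∀ (G : IsoradialGraph δ η),
      ∀ u ∈ G.verts, #(G.nbrs u) ≤ d := by
  have hsin : 0 < Real.sin η := Real.sin_pos_of_pos_of_lt_pi hη hη'
  obtain ⟨d, hd⟩ := exists_card_le_of_pairwise_lt_dist
    (isCompact_closedBall (0 : ℂ) 2).totallyBounded hsin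
  refine ⟨d + 1, d.succ_pos, fun {δ} hδ G u hu => le_add_right ?_⟩
  -- Rescale the edges at `u` to mesh one.
  have hinj : Function.Injective fun v : ℂ => (δ⁻¹ : ℝ) • (v - u) :=
    (smul_right_injective ℂ (inv_ne_zero hδ.ne')).comp sub_left_injective
  rw [← card_image_of_injective _ hinj]
  refine hd _ ?_ ?_
  · intro w hw
    obtain ⟨v, hv, rfl⟩ := mem_image.1 hw
    rw [mem_closedBall_zero_iff, norm_smul, Real.norm_of_nonneg (inv_nonneg.2 hδ.le),
      ← dist_eq_norm, inv_mul_le_iff₀ hδ, mul_comm]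
    exact dist_le_of_mem_nbrs hδ.le hu hv
  · rw [coe_image, hinj.injOn.pairwise_image]
    intro v hv w hw hne
    rw [Function.onFun, dist_smul₀, dist_sub_right, Real.norm_of_nonneg (inv_nonneg.2 hδ.le),
      lt_inv_mul_iff₀ hδ]
    by_contra! hle
    refine hne (eq_of_dist_lt hη hδ.le (G.nbrs_sub u hu v hv) (G.nbrs_sub u hu w hw) ?_)
    linarith [mul_pos hδ hsin]

theorem exists_nbr_le_inner (hδ : 0 < δ) (hu : u ∈ G.verts) (e : ℂ) :
    ∃ v ∈ G.nbrs u, Real.sin η ^ 2 * δ * ‖e‖ ≤ inner ℝ e (v - u) := by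
  obtain rfl | he := eq_or_ne e 0
  · obtain ⟨v, hv⟩ := G.nbrs_nonempty u hu
    exact ⟨v, hv, by simp only [norm_zero, mul_zero, inner_zero_left, le_refl]⟩
  have he' : 0 < ‖e‖ := norm_pos_iff.2 he
  have hlow : ∀ v ∈ G.nbrs u, -(2 * δ * ‖e‖) ≤ inner ℝ e (v - u) := fun v hv => by
    have hlen := dist_le_of_mem_nbrs hδ.le hu hv
    rw [dist_eq_norm] at hlen
    have hcs := neg_le_of_abs_le (abs_real_inner_le_norm e (v - u))
    nlinarith
  have hvar : 2 * δ * ‖e‖ * (Real.sin η ^ 2 * δ * ‖e‖) *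
      ∑ v ∈ G.nbrs u, Real.tan (G.halfAngle u v) ≤
        ∑ v ∈ G.nbrs u, Real.tan (G.halfAngle u v) * inner ℝ e (v - u) ^ 2 :=
    calc 2 * δ * ‖e‖ * (Real.sin η ^ 2 * δ * ‖e‖) * ∑ v ∈ G.nbrs u, Real.tan (G.halfAngle u v)
        = ‖e‖ ^ 2 / 2 * ∑ v ∈ G.nbrs u,
            Real.tan (G.halfAngle u v) * (2 * δ * Real.sin η) ^ 2 := by rw [← sum_mul]; ring
      _ ≤ ‖e‖ ^ 2 / 2 * ∑ v ∈ G.nbrs u, Real.tan (G.halfAngle u v) * dist v u ^ 2 := by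
        gcongr with v hv
        · exact (tan_halfAngle_pos hη hu hv).le
        · exact mul_nonneg (by positivity) (sin_pos hη hu).le
        · exact le_dist_of_mem_nbrs hη hδ.le hu hv
      _ = _ := (sum_tan_mul_inner_sq hu e).symm
  exact exists_le_of_sum_mul_eq_zero_of_le_sum_mul_sq (G.nbrs_nonempty u hu) (by positivity)
    (fun v hv => tan_halfAngle_pos hη hu hv) (sum_tan_mul_inner hu e) hlow hvar

theorem exists_nbr_dist_lt (hδ : 0 < δ) (hu : u ∈ G.verts) (z : ℂ) :
    ∃ v ∈ G.nbrs u, dist u z < dist v z := by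
  obtain ⟨v, hv, hinner⟩ := exists_nbr_le_inner hη hδ hu (u - z)
  refine ⟨v, hv, ?_⟩
  have hvu : 0 < ‖v - u‖ := norm_pos_iff.2 (sub_ne_zero.2 (G.nbrs_ne u hu v hv))
  have hsq := norm_add_sq_real (u - z) (v - u)
  have hinner' : 0 ≤ inner ℝ (u - z) (v - u) := le_trans (by positivity) hinner
  rw [sub_add_sub_cancel'] at hsq
  rw [dist_eq_norm, dist_eq_norm]
  refine lt_of_pow_lt_pow_left₀ 2 (norm_nonneg _) ?_
  nlinarith

theorem exists_nbr_dist_le (hδ : 0 < δ) (hu : u ∈ G.verts) {z : ℂ}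
    (hfar : 4 * δ ≤ Real.sin η ^ 2 * dist u z) :
    ∃ v ∈ G.nbrs u, dist v z ≤ dist u z - Real.sin η ^ 2 / 2 * δ := by
  obtain ⟨v, hv, hinner⟩ := exists_nbr_le_inner hη hδ hu (z - u)
  refine ⟨v, hv, ?_⟩
  have hlen := dist_le_of_mem_nbrs hδ.le hu hv
  have hsq := norm_sub_sq_real (z - u) (v - u)
  rw [sub_sub_sub_cancel_right] at hsq
  rw [dist_comm u z] at hfar ⊢
  rw [dist_comm v z]
  rw [← dist_eq_norm, ← dist_eq_norm, ← dist_eq_norm] at hsq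
  rw [← dist_eq_norm] at hinner
  have hlen_sq : dist v u ^ 2 ≤ 4 * δ ^ 2 := by nlinarith [dist_nonneg (x := v) (y := u)]
  refine abs_le_of_sq_le_sq' (?_ : dist z v ^ 2 ≤ _ ^ 2) ?_ |>.2
  · nlinarith [mul_le_mul_of_nonneg_left hfar hδ.le, sq_nonneg (Real.sin η ^ 2 / 2 * δ)]
  · nlinarith [dist_nonneg (x := z) (y := u)]

theorem tan_sq_div_mul_le_of_superharmonic {h : ℂ → ℝ} {d : ℕ} (hd : #(G.nbrs u) ≤ d)
    (hu : u ∈ G.verts) (hΔ : G.network.laplacian h u ≤ 0) (hh : ∀ w ∈ G.nbrs u, 0 ≤ h w)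
    (hhu : 0 ≤ h u) (hv : v ∈ G.nbrs u) : Real.tan η ^ 2 / d * h v ≤ h u := by
  have htan := tan_pos hη hu
  have hdpos : (0 : ℝ) < d := by exact_mod_cast (card_pos.2 ⟨v, hv⟩).trans_le hd
  have hcond : ∑ w ∈ G.nbrs u, Real.tan (G.halfAngle u w) ≤ d * (Real.tan η)⁻¹ :=
    calc ∑ w ∈ G.nbrs u, Real.tan (G.halfAngle u w) ≤ #(G.nbrs u) • (Real.tan η)⁻¹ :=
          sum_le_card_nsmul _ _ _ fun w hw => tan_halfAngle_le_inv_tan hη hu hw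
      _ ≤ d * (Real.tan η)⁻¹ := by rw [nsmul_eq_mul]; gcongr
  have hedge : Real.tan η * h v ≤ d * (Real.tan η)⁻¹ * h u :=
    calc Real.tan η * h v ≤ Real.tan (G.halfAngle u v) * h v :=
          mul_le_mul_of_nonneg_right (tan_le_tan_halfAngle hη hu hv) (hh v hv)
      _ ≤ (∑ w ∈ G.nbrs u, Real.tan (G.halfAngle u w)) * h u :=
          G.network.cond_mul_le_of_superharmonic
            (fun w hw => (tan_halfAngle_pos hη hu hw).le) hh hΔ hv
      _ ≤ d * (Real.tan η)⁻¹ * h u := mul_le_mul_of_nonneg_right hcond hhu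
  rw [div_mul_eq_mul_div, div_le_iff₀ hdpos]
  calc Real.tan η ^ 2 * h v = Real.tan η * (Real.tan η * h v) := by ring
    _ ≤ Real.tan η * (d * (Real.tan η)⁻¹ * h u) := by gcongr
    _ = h u * d := by field_simp

end Edges

section Disc

variable {u₀ b : ℂ} {R C : ℝ} {F : ℂ → ℝ} {D : Finset ℂ}

variable (G u₀) in
/-- `F` agrees with `(2π)⁻¹ log |u - u₀|` up to an error `C * δ² / |u - u₀|²`, as does the free
Green's function with pole `u₀`. -/
def HasLogAsymptotics (C : ℝ) (F : ℂ → ℝ) : Prop :=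
  ∀ u ∈ G.verts, u ≠ u₀ →
    |F u - (2 * Real.pi)⁻¹ * Real.log (dist u u₀)| ≤ C * δ ^ 2 / dist u u₀ ^ 2

theorem HasLogAsymptotics.abs_sub_le (hF : G.HasLogAsymptotics u₀ C F) (hC : 0 ≤ C)
    (hu : u ∈ G.verts) {ρ : ℝ} (hρ : 0 < ρ) (hρu : ρ ≤ dist u u₀) :
    |F u - (2 * Real.pi)⁻¹ * Real.log (dist u u₀)| ≤ C * (δ / ρ) ^ 2 :=
  calc |F u - (2 * Real.pi)⁻¹ * Real.log (dist u u₀)| ≤ C * δ ^ 2 / dist u u₀ ^ 2 :=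
        hF u hu (dist_pos.1 (hρ.trans_le hρu))
    _ ≤ C * δ ^ 2 / ρ ^ 2 := by gcongr
    _ = C * (δ / ρ) ^ 2 := by ring

variable (G u₀ R D) in
/-- `D` is the set of interior vertices of the discretization of the disc `ball u₀ R`; the boundary
vertices of this discretization form `G.network.outerBoundary D`. -/
def IsDisc : Prop :=
  ∀ v, v ∈ D ↔ v ∈ G.verts ∩ ball u₀ R

variable (hD : G.IsDisc u₀ R D)
include hD

theorem IsDisc.mem_verts (hu : u ∈ D) : u ∈ G.verts :=
  ((hD u).1 hu).1

theorem IsDisc.dist_lt (hu : u ∈ D) : dist u u₀ < R :=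
  ((hD u).1 hu).2

theorem IsDisc.mem_verts_of_mem_outerBoundary (hb : b ∈ G.network.outerBoundary D) :
    b ∈ G.verts := by
  obtain ⟨-, v, hv, hbv⟩ := Network.mem_outerBoundary.1 hb
  exact G.nbrs_sub v (hD.mem_verts hv) b hbv

theorem IsDisc.le_dist_of_mem_outerBoundary (hb : b ∈ G.network.outerBoundary D) :
    R ≤ dist b u₀ := by
  by_contra! hlt
  exact (Network.mem_outerBoundary.1 hb).1 ((hD b).2 ⟨hD.mem_verts_of_mem_outerBoundary hb, hlt⟩)

theorem IsDisc.dist_le_of_mem_outerBoundary (hδ : 0 ≤ δ) (hb : b ∈ G.network.outerBoundary D) :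
    dist b u₀ ≤ R + 2 * δ := by
  obtain ⟨-, v, hv, hbv⟩ := Network.mem_outerBoundary.1 hb
  linarith [dist_triangle b v u₀, dist_le_of_mem_nbrs hδ (hD.mem_verts hv) hbv, hD.dist_lt hv]

theorem IsDisc.le_dist_of_mem_nbrs (hδ : 0 ≤ δ) (hb : b ∈ G.network.outerBoundary D) (hv : v ∈ D)
    (hbv : b ∈ G.nbrs v) : R - 2 * δ ≤ dist v u₀ := by
  linarith [dist_triangle b v u₀, dist_le_of_mem_nbrs hδ (hD.mem_verts hv) hbv,
    hD.le_dist_of_mem_outerBoundary hb]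

variable (hη : 0 < η) (hδ : 0 < δ)
include hη hδ

theorem IsDisc.le_of_superharmonic {f : ℂ → ℝ} {m : ℝ}
    (hf : ∀ u ∈ D, G.network.laplacian f u ≤ 0) (hm : ∀ b ∈ G.network.outerBoundary D, m ≤ f b) :
    ∀ u ∈ D, m ≤ f u :=
  Network.le_of_superharmonic
    (fun _ hu _ hv => tan_halfAngle_pos hη (hD.mem_verts hu) hv)
    (fun _ hu => exists_nbr_dist_lt hη hδ (hD.mem_verts hu) u₀) hf hm

theorem IsDisc.le_of_subharmonic {f : ℂ → ℝ} {M : ℝ}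
    (hf : ∀ u ∈ D, 0 ≤ G.network.laplacian f u) (hM : ∀ b ∈ G.network.outerBoundary D, f b ≤ M) :
    ∀ u ∈ D, f u ≤ M := fun u hu =>
  neg_le_neg_iff.1 <| hD.le_of_superharmonic hη hδ (f := -f)
    (fun v hv => by rw [map_neg, Pi.neg_apply, neg_nonpos]; exact hf v hv)
    (fun b hb => neg_le_neg (hM b hb)) u hu

/-- Move inwards by edges, each of which shortens the distance to `u₀` by at least
`sin² η / 2 * δ` and is too short to jump over the annulus of `hann`. -/
theorem IsDisc.pow_mul_le {h : ℂ → ℝ} {q m : ℝ} (hR : 7 * δ ≤ Real.sin η ^ 2 * R)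
    (hq₀ : 0 ≤ q) (hq₁ : q ≤ 1) (hm : 0 ≤ m)
    (hedge : ∀ u ∈ D, ∀ v ∈ D, v ∈ G.nbrs u → q * h v ≤ h u)
    (hann : ∀ u ∈ D, R - 5 * δ ≤ dist u u₀ → dist u u₀ ≤ R - 3 * δ → m ≤ h u) (n : ℕ) :
    ∀ u ∈ D, R - 5 * δ ≤ dist u u₀ → dist u u₀ ≤ R - 3 * δ + n * (Real.sin η ^ 2 / 2 * δ) →
      q ^ n * m ≤ h u := by
  induction n with
  | zero =>
    intro u hu hlow hupp
    rw [pow_zero, one_mul]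
    exact hann u hu hlow (by simpa only [Nat.cast_zero, zero_mul, add_zero] using hupp)
  | succ n ih =>
    intro u hu hlow hupp
    obtain hle | hlt := le_or_gt (dist u u₀) (R - 3 * δ)
    · exact (mul_le_of_le_one_left hm (pow_le_one₀ hq₀ hq₁)).trans (hann u hu hlow hle)
    have hfar : 4 * δ ≤ Real.sin η ^ 2 * dist u u₀ := by
      nlinarith [mul_le_mul_of_nonneg_left hlt.le (sq_nonneg (Real.sin η)), Real.sin_sq_le_one η]
    obtain ⟨v, hv, hvu⟩ := exists_nbr_dist_le hη hδ (hD.mem_verts hu) hfar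
    have hstep : 0 ≤ Real.sin η ^ 2 / 2 * δ := by positivity
    have hvD : v ∈ D := (hD v).2
      ⟨G.nbrs_sub u (hD.mem_verts hu) v hv, mem_ball.2 (by linarith [hD.dist_lt hu])⟩
    have hlen := dist_le_of_mem_nbrs hδ.le (hD.mem_verts hu) hv
    push_cast at hupp
    calc q ^ (n + 1) * m = q * (q ^ n * m) := by ring
      _ ≤ q * h v := mul_le_mul_of_nonneg_left (ih v hvD
          (by linarith [dist_triangle_left u u₀ v]) (by linarith)) hq₀
      _ ≤ h u := hedge u hu v hvD hv

section Green

variable {ω : ℂ → ℂ → ℝ} {g : ℂ → ℝ} {a : ℂ} {d : ℕ} (hu₀ : u₀ ∈ D)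
  (hω : G.network.IsHarmonicMeasure D ω) (hg : G.network.IsGreen D u₀ g)
  (hd : ∀ u ∈ G.verts, #(G.nbrs u) ≤ d)
include hg

theorem IsDisc.neg_green_nonneg (hu : u ∈ D) : 0 ≤ -g u :=
  hD.le_of_superharmonic hη hδ (f := -g) (fun _ hv => hg.laplacian_neg_nonpos hv)
    (fun b hb => by rw [Pi.neg_apply, hg.eq_zero b hb, neg_zero]) u hu

include hu₀ hω in
theorem IsDisc.tan_mul_neg_green_le (ha : a ∈ G.network.outerBoundary D) (hv : v ∈ D)
    (hav : a ∈ G.nbrs v) : Real.tan η * -g v ≤ ω u₀ a := by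
  rw [hω.eq_sum_cond_mul_neg_green hg hu₀ ha]
  calc Real.tan η * -g v ≤ Real.tan (G.halfAngle v a) * -g v :=
        mul_le_mul_of_nonneg_right (tan_le_tan_halfAngle hη (hD.mem_verts hv) hav)
          (hD.neg_green_nonneg hη hδ hg hv)
    _ ≤ ∑ x ∈ D with a ∈ G.nbrs x, Real.tan (G.halfAngle x a) * -g x :=
        single_le_sum (f := fun x => Real.tan (G.halfAngle x a) * -g x)
          (fun x hx => mul_nonneg
            (tan_halfAngle_pos hη (hD.mem_verts (mem_filter.1 hx).1) (mem_filter.1 hx).2).le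
            (hD.neg_green_nonneg hη hδ hg (mem_filter.1 hx).1))
          (mem_filter.2 ⟨hv, hav⟩)

include hu₀ hω hd in
theorem IsDisc.harmonicMeasure_le {M : ℝ} (ha : a ∈ G.network.outerBoundary D)
    (hM : ∀ v ∈ D, R - 5 * δ ≤ dist v u₀ → -g v ≤ M) : ω u₀ a ≤ d * (Real.tan η)⁻¹ * M := by
  have haV := hD.mem_verts_of_mem_outerBoundary ha
  have htan := tan_pos hη haV
  have hM' : ∀ v ∈ D, a ∈ G.nbrs v → -g v ≤ M := fun v hv hav =>
    hM v hv (by linarith [hD.le_dist_of_mem_nbrs hδ.le ha hv hav])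
  obtain ⟨-, v, hv, hav⟩ := Network.mem_outerBoundary.1 ha
  have hM₀ : 0 ≤ M := (hD.neg_green_nonneg hη hδ hg hv).trans (hM' v hv hav)
  have hcard : #{x ∈ D | a ∈ G.nbrs x} ≤ d :=
    (card_le_card fun x hx => (G.nbrs_symm x a).1 (mem_filter.1 hx).2).trans (hd a haV)
  rw [hω.eq_sum_cond_mul_neg_green hg hu₀ ha]
  calc ∑ x ∈ D with a ∈ G.nbrs x, Real.tan (G.halfAngle x a) * -g x
      ≤ #{x ∈ D | a ∈ G.nbrs x} • ((Real.tan η)⁻¹ * M) :=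
        sum_le_card_nsmul _ _ _ fun x hx => by
          obtain ⟨hxD, hax⟩ := mem_filter.1 hx
          exact mul_le_mul (tan_halfAngle_le_inv_tan hη (hD.mem_verts hxD) hax) (hM' x hxD hax)
            (hD.neg_green_nonneg hη hδ hg hxD) (inv_nonneg.2 htan.le)
    _ ≤ d * (Real.tan η)⁻¹ * M := by rw [nsmul_eq_mul, mul_assoc]; gcongr

include hd in
theorem IsDisc.pow_mul_le_neg_green {m : ℝ} (hR : 7 * δ ≤ Real.sin η ^ 2 * R) (hm : 0 ≤ m)
    (hann : ∀ u ∈ D, R - 5 * δ ≤ dist u u₀ → dist u u₀ ≤ R - 3 * δ → m ≤ -g u)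
    (hu : u ∈ D) (hlow : R - 5 * δ ≤ dist u u₀) :
    (Real.tan η ^ 2 / d) ^ ⌈6 / Real.sin η ^ 2⌉₊ * m ≤ -g u := by
  have huV := hD.mem_verts hu
  have htan := tan_pos hη huV
  have hsin := sin_pos hη huV
  have hnonneg : ∀ w ∈ D, ∀ v ∈ G.nbrs w, 0 ≤ -g v := fun w hw v hv =>
    (mem_union.1 (Network.mem_union_outerBoundary (N := G.network) hw hv)).elim
      (hD.neg_green_nonneg hη hδ hg) fun hvB => by rw [hg.eq_zero v hvB, neg_zero]
  have hq : Real.tan η ^ 2 / d ≤ 1 := by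
    have hd₁ : (1 : ℝ) ≤ d := by
      exact_mod_cast (card_pos.2 (G.nbrs_nonempty u huV)).trans_le (hd u huV)
    have htan₁ : Real.tan η ≤ 1 := by
      rw [← Real.tan_pi_div_four]
      have hη₁ := le_pi_div_four huV
      exact Real.strictMonoOn_tan.monotoneOn ⟨by linarith, by linarith⟩
        ⟨by linarith, by linarith [Real.pi_pos]⟩ hη₁
    exact div_le_one_of_le₀ ((pow_le_one₀ htan.le htan₁).trans hd₁) (by linarith)
  refine hD.pow_mul_le hη hδ (h := -g) hR (by positivity) hq hm (fun w hw v _ hv => ?_) hann _ u hu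
    hlow ?_
  · exact tan_sq_div_mul_le_of_superharmonic hη (hd w (hD.mem_verts hw)) (hD.mem_verts hw)
      (hg.laplacian_neg_nonpos hw) (hnonneg w hw) (hD.neg_green_nonneg hη hδ hg hw) hv
  · have hsteps := (div_le_iff₀ (by positivity)).1 (Nat.le_ceil (6 / Real.sin η ^ 2))
    nlinarith [hD.dist_lt hu]

include hu₀ hω hd in
theorem IsDisc.le_harmonicMeasure {m : ℝ} (hR : 7 * δ ≤ Real.sin η ^ 2 * R) (hm : 0 ≤ m)
    (hann : ∀ u ∈ D, R - 5 * δ ≤ dist u u₀ → dist u u₀ ≤ R - 3 * δ → m ≤ -g u)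
    (ha : a ∈ G.network.outerBoundary D) :
    Real.tan η * ((Real.tan η ^ 2 / d) ^ ⌈6 / Real.sin η ^ 2⌉₊ * m) ≤ ω u₀ a := by
  obtain ⟨-, v, hv, hav⟩ := Network.mem_outerBoundary.1 ha
  have hlow : R - 5 * δ ≤ dist v u₀ := by linarith [hD.le_dist_of_mem_nbrs hδ.le ha hv hav]
  exact (mul_le_mul_of_nonneg_left (hD.pow_mul_le_neg_green hη hδ hg hd hR hm hann hv hlow)
    (tan_pos hη (hD.mem_verts hv)).le).trans (hD.tan_mul_neg_green_le hη hδ hu₀ hω hg ha hv hav)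

end Green

section LogAsymptotics

variable {ω : ℂ → ℂ → ℝ} (hF : G.HasLogAsymptotics u₀ C F) (hC : 0 ≤ C)
  (hω : G.network.IsHarmonicMeasure D ω)
include hF hC hω

theorem HasLogAsymptotics.le_harmonicExtension (hR : 0 < R) (hu : u ∈ D) :
    (2 * Real.pi)⁻¹ * Real.log R - C * (δ / R) ^ 2 ≤ G.network.harmonicExtension D ω F u := by
  refine hD.le_of_superharmonic hη hδ (fun v hv => (hω.laplacian_harmonicExtension hv).le)
    (fun b hb => ?_) u hu
  rw [hω.harmonicExtension_eq hb]
  have hbR := hD.le_dist_of_mem_outerBoundary hb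
  have hFb := neg_le_of_abs_le (hF.abs_sub_le hC (hD.mem_verts_of_mem_outerBoundary hb) hR hbR)
  have hlog : (2 * Real.pi)⁻¹ * Real.log R ≤ (2 * Real.pi)⁻¹ * Real.log (dist b u₀) := by gcongr
  linarith

theorem HasLogAsymptotics.harmonicExtension_le (hR : 0 < R) (hu : u ∈ D) :
    G.network.harmonicExtension D ω F u ≤
      (2 * Real.pi)⁻¹ * (Real.log R + 2 * (δ / R)) + C * (δ / R) ^ 2 := by
  refine hD.le_of_subharmonic hη hδ (fun v hv => (hω.laplacian_harmonicExtension hv).ge)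
    (fun b hb => ?_) u hu
  rw [hω.harmonicExtension_eq hb]
  have hbR := hD.le_dist_of_mem_outerBoundary hb
  have hFb := le_of_abs_le (hF.abs_sub_le hC (hD.mem_verts_of_mem_outerBoundary hb) hR hbR)
  have hlog : (2 * Real.pi)⁻¹ * Real.log (dist b u₀) ≤
      (2 * Real.pi)⁻¹ * (Real.log R + 2 * (δ / R)) := by
    gcongr
    calc Real.log (dist b u₀) ≤ Real.log R + (dist b u₀ - R) / R :=
          log_le_log_add_sub_div hR (hR.trans_le hbR)
      _ ≤ Real.log R + 2 * δ / R := by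
          gcongr; linarith [hD.dist_le_of_mem_outerBoundary hδ.le hb]
      _ = Real.log R + 2 * (δ / R) := by ring
  linarith

theorem HasLogAsymptotics.neg_green_le (hR : 10 * δ ≤ R) :
    ∀ u ∈ D, R - 5 * δ ≤ dist u u₀ →
      -(F - G.network.harmonicExtension D ω F) u ≤ (2 + 5 * C) * (δ / R) := by
  intro u hu hlow
  rw [Pi.sub_apply, neg_sub]
  have hR₀ : 0 < R := by linarith
  have hhalf : R / 2 ≤ dist u u₀ := by linarith
  have hFu := neg_le_of_abs_le (hF.abs_sub_le hC (hD.mem_verts hu) (half_pos hR₀) hhalf)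
  have hext := hF.harmonicExtension_le hD hη hδ hC hω hR₀ hu
  have hlog : Real.log R ≤ Real.log (dist u u₀) + 10 * (δ / R) :=
    calc Real.log R ≤ Real.log (dist u u₀) + (R - dist u u₀) / dist u u₀ :=
          log_le_log_add_sub_div (by linarith) hR₀
      _ ≤ Real.log (dist u u₀) + 5 * δ / (R / 2) := by gcongr; linarith
      _ = Real.log (dist u u₀) + 10 * (δ / R) := by ring
  have hπlog : (2 * Real.pi)⁻¹ * Real.log R ≤
      (2 * Real.pi)⁻¹ * (Real.log (dist u u₀) + 10 * (δ / R)) := by gcongr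
  have hratio : 0 ≤ δ / R := by positivity
  have hratio₁ : δ / R ≤ 1 := (div_le_one hR₀).2 (by linarith)
  have herror : C * (δ / R) ^ 2 ≤ C * (δ / R) := by
    gcongr; exact pow_le_of_le_one hratio hratio₁ two_ne_zero
  have hsplit : C * (δ / (R / 2)) ^ 2 = 4 * (C * (δ / R) ^ 2) := by ring
  have hπ := mul_le_mul_of_nonneg_right inv_two_pi_mem_Icc.2 hratio
  linarith

theorem HasLogAsymptotics.le_neg_green (hR : 10 * δ ≤ R) (hCR : 40 * C * δ ≤ R) :
    ∀ u ∈ D, R - 5 * δ ≤ dist u u₀ → dist u u₀ ≤ R - 3 * δ →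
      1 / 4 * (δ / R) ≤ -(F - G.network.harmonicExtension D ω F) u := by
  intro u hu hlow hupp
  rw [Pi.sub_apply, neg_sub]
  have hR₀ : 0 < R := by linarith
  have hhalf : R / 2 ≤ dist u u₀ := by linarith
  have hFu := le_of_abs_le (hF.abs_sub_le hC (hD.mem_verts hu) (half_pos hR₀) hhalf)
  have hext := hF.le_harmonicExtension hD hη hδ hC hω hR₀ hu
  have hlog : Real.log (dist u u₀) ≤ Real.log R - 3 * (δ / R) :=
    calc Real.log (dist u u₀) ≤ Real.log R + (dist u u₀ - R) / R :=
          log_le_log_add_sub_div hR₀ (by linarith)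
      _ ≤ Real.log R + -(3 * δ) / R := by gcongr; linarith
      _ = Real.log R - 3 * (δ / R) := by ring
  have hπlog : (2 * Real.pi)⁻¹ * Real.log (dist u u₀) ≤
      (2 * Real.pi)⁻¹ * (Real.log R - 3 * (δ / R)) := by gcongr
  have hratio : 0 ≤ δ / R := by positivity
  have herror : 40 * C * (δ / R) * (δ / R) ≤ 1 * (δ / R) := by
    gcongr
    rw [← mul_div_assoc]
    exact (div_le_one hR₀).2 hCR
  have hsplit : C * (δ / (R / 2)) ^ 2 = 4 * (C * (δ / R) ^ 2) := by ring
  have hπ := mul_le_mul_of_nonneg_right inv_two_pi_mem_Icc.1 hratio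
  linarith

end LogAsymptotics

end Disc

end IsoradialGraph

/-- Proposition A.1, exit probabilities in a discretized disc: Suppose
the free Green's function of an isoradial graph satisfies
`|G_Γ(u; u₀) − (2π)⁻¹ log |u − u₀|| ≤ C δ² / |u − u₀|²` for `u ≠ u₀`. Then, for the
discretized disc `B^δ_Γ(u₀, R)` with `R/δ` sufficiently large, the Green's function
`G_{B^δ_Γ(u₀,R)}(u; u₀) = G_Γ(u; u₀) − ∑_{a ∈ ∂} ω^δ(u; {a}) G_Γ(a; u₀)` satisfies
`|G_{B^δ_Γ(u₀,R)}(u; u₀)| ≍ δ/R` for all vertices `u` with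
`R − 5δ ≤ |u − u₀| ≤ R − 3δ`; consequently (via the identity
`ω^δ(u₀; {a}) = −tan θ_{a a_int}·G_{B^δ_Γ(u₀,R)}(a_int; u₀)`) the exit probability
at each boundary vertex satisfies `ω^δ(u₀; {a}; B^δ_Γ(u₀, R)) ≍ δ/R`. -/
theorem exit_probabilities_in_disc (η C : ℝ) (hη₀ : 0 < η) (hη₁ : η < Real.pi / 4)
    (hC : 0 < C) :
    ∃ K c₁ c₂ : ℝ, 1 ≤ K ∧ 0 < c₁ ∧ 0 < c₂ ∧
      ∀ (δ : ℝ), 0 < δ →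
      ∀ (R : ℝ), K * δ ≤ R →
      ∀ (G : IsoradialGraph δ η) (u₀ : ℂ), u₀ ∈ G.verts →
      ∀ (IntF Bd : Finset ℂ),
      (∀ v, v ∈ IntF ↔ v ∈ G.verts ∩ ball u₀ R) →
      (∀ a, a ∈ Bd ↔ (a ∉ IntF ∧ ∃ v ∈ IntF, a ∈ G.nbrs v)) →
      u₀ ∈ IntF →
      ∀ (Gfree : ℂ → ℝ),
      (∀ u ∈ G.verts, u ≠ u₀ → G.HarmAt Gfree u) →
      (∑ v ∈ G.nbrs u₀, Real.tan (G.halfAngle u₀ v) * (Gfree v - Gfree u₀)) = 1 →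
      (∀ u ∈ G.verts, u ≠ u₀ →
        |Gfree u - (2 * Real.pi)⁻¹ * Real.log (dist u u₀)|
          ≤ C * δ ^ 2 / dist u u₀ ^ 2) →
      ∀ (ω : ℂ → ℂ → ℝ),
      (∀ a ∈ Bd,
        (∀ u ∈ IntF, G.HarmAt (fun w => ω w a) u) ∧
        ω a a = 1 ∧ (∀ b ∈ Bd, b ≠ a → ω b a = 0)) →
      ((∀ u ∈ IntF, R - 5 * δ ≤ dist u u₀ → dist u u₀ ≤ R - 3 * δ →
          c₁ * δ / R ≤ |Gfree u - ∑ a ∈ Bd, ω u a * Gfree a| ∧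
          |Gfree u - ∑ a ∈ Bd, ω u a * Gfree a| ≤ c₂ * δ / R) ∧
       (∀ a ∈ Bd, c₁ * δ / R ≤ ω u₀ a ∧ ω u₀ a ≤ c₂ * δ / R)) := by
  obtain ⟨d, hd₀, hd⟩ := IsoradialGraph.exists_card_nbrs_le hη₀ (by linarith [Real.pi_pos])
  have hsin : 0 < Real.sin η := Real.sin_pos_of_pos_of_lt_pi hη₀ (by linarith [Real.pi_pos])
  have htan : 0 < Real.tan η :=
    Real.tan_pos_of_pos_of_lt_pi_div_two hη₀ (by linarith [Real.pi_pos])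
  refine ⟨max (max 10 (40 * C)) (7 / Real.sin η ^ 2),
    min (1 / 4) (Real.tan η * ((Real.tan η ^ 2 / d) ^ ⌈6 / Real.sin η ^ 2⌉₊ * (1 / 4))),
    max (2 + 5 * C) (d * (Real.tan η)⁻¹ * (2 + 5 * C)),
    le_max_of_le_left (le_max_of_le_left (by norm_num)), by positivity, by positivity, ?_⟩
  intro δ hδ R hR G u₀ _ D B (hD : G.IsDisc u₀ R D) hB hu₀ F hFharm hFpole hF ω hω
  obtain rfl : B = G.network.outerBoundary D := by ext a; rw [hB, Network.mem_outerBoundary]; rfl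
  replace hω : G.network.IsHarmonicMeasure D ω :=
    ⟨fun a ha => (hω a ha).1, fun a ha => (hω a ha).2.1, fun a ha => (hω a ha).2.2⟩
  have hg := hω.isGreen_sub hu₀ hFpole fun u hu => hFharm u (hD.mem_verts hu)
  simp only [max_mul_of_nonneg _ _ hδ.le, max_le_iff, div_mul_eq_mul_div,
    div_le_iff₀' (pow_pos hsin 2)] at hR
  have hann := IsoradialGraph.HasLogAsymptotics.le_neg_green hD hη₀ hδ hF hC.le hω hR.1.1 hR.1.2
  have hnear := IsoradialGraph.HasLogAsymptotics.neg_green_le hD hη₀ hδ hF hC.le hω hR.1.1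
  have ht : 0 ≤ δ / R := div_nonneg hδ.le (by linarith)
  simp only [mul_div_assoc _ δ R]
  refine ⟨fun u hu hlow hupp => ?_, fun a ha => ⟨?_, ?_⟩⟩
  · change _ ≤ |(F - G.network.harmonicExtension D ω F) u| ∧
      |(F - G.network.harmonicExtension D ω F) u| ≤ _
    rw [abs_of_nonpos (neg_nonneg.1 (hD.neg_green_nonneg hη₀ hδ hg hu))]
    exact ⟨(mul_le_mul_of_nonneg_right (min_le_left _ _) ht).trans (hann u hu hlow hupp),
      (hnear u hu hlow).trans (mul_le_mul_of_nonneg_right (le_max_left _ _) ht)⟩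
  · refine (mul_le_mul_of_nonneg_right (min_le_right _ _) ht).trans ?_
    simpa only [mul_assoc] using
      hD.le_harmonicMeasure hη₀ hδ hu₀ hω hg (hd hδ G) hR.2 (by positivity) hann ha
  · refine le_trans ?_ (mul_le_mul_of_nonneg_right (le_max_right _ _) ht)
    simpa only [mul_assoc] using hD.harmonicMeasure_le hη₀ hδ hu₀ hω hg (hd hδ G) ha hnear
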